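/- Fix integers k > 2, m with 1 ≤ m ≤ k−1, and n = k−m, and assign weight k to the variables a and y and weight 1 to b and x. Let F_ℓ(a,b,x) = a + b^m x^n + Σ_{j=m+1}^{k−1} γ_j b^j x^{k−j} + Σ_{ν=k+1}^{ℓ} P_ν(a,b,x), where ℓ > k, γ_j ∈ ℝ, and each P_ν is weighted homogeneous of weight ν. Then there exists a polynomial change of coordinates of the triangular form X = x + ξ(x,y), Y = y + η(x,y), A = a + α(a,b), B = b + β(a,b) (with ξ, η, α, β polynomials without constant or linear terms in the weighted sense) such that the weighted ℓ-jet of the defining function of the transformed hypersurface is a + b^m x^n + Σ_{j=m+1}^{k−1} γ_j b^j x^{k−j} + Σ_{ν=k+1}^{ℓ} P*_ν, where for every k < ν ≤ ℓ the weighted homogeneous polynomial P*_ν contains no monomials of the following types: a^i x^j and a^i b^j (with ki+j = ν); a^i b^m x^{n−1+j} and a^i b^{m−1+j} x^n (with k(i+1)+j−1 = ν); a^i b^{2m} x^{2n} (with k(i+2) = ν) and a^i b^{3m} x^{3n} (with k(i+3) = ν); a^i b x^{2n} if m = 1; and a^i b^{2m} x if n = 1. -/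

import Mathlib

/- Normal form for weighted ℓ-jets in the singular (finite type k > 2) case.
   Variables of `MvPolynomial (Fin 3) ℝ` are (a,b,x) (indices 0,1,2) with
   weights a ↦ k, b ↦ 1, x ↦ 1; polynomials in (x,y) have weights x ↦ 1,
   y ↦ k; polynomials in (a,b) have weights a ↦ k, b ↦ 1. -/

open MvPolynomial

/-- the monomial types excluded by the singular normal form w.r.t. `b^m x^n`:
`a^i x^j`, `a^i b^j`, `a^i b^m x^{n-1+j}`, `a^i b^{m-1+j} x^n`,
`a^i b^{2m} x^{2n}`, `a^i b^{3m} x^{3n}`, `a^i b x^{2n}` (if m = 1),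
`a^i b^{2m} x` (if n = 1). -/
def SingNonNormal (m n : ℕ) (d : Fin 3 →₀ ℕ) : Prop :=
  d 1 = 0 ∨ d 2 = 0 ∨
  (d 1 = m ∧ n - 1 ≤ d 2) ∨ (d 2 = n ∧ m - 1 ≤ d 1) ∨
  (d 1 = 2 * m ∧ d 2 = 2 * n) ∨ (d 1 = 3 * m ∧ d 2 = 3 * n) ∨
  (m = 1 ∧ d 1 = 1 ∧ d 2 = 2 * n) ∨ (n = 1 ∧ d 1 = 2 * m ∧ d 2 = 1)

/-!
The weights are treated one after another. A change of coordinates which raises weights by `t`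
modifies the terms of `F` of weight `k + t` by the infinitesimal action of its vector fields on the
part `a + b^m x^n + ∑ γ_j b^j x^(k-j)` of weight `k`, up to terms of higher weight. It thus suffices
that the image of this action and the normal forms together span the polynomials of weight `k + t`.

A second grading, which gives `a^i b^j x^l` the weight `n j - m l`, removes the `γ_j`: the model
`G = a + b^m x^n` is homogeneous for it and the other terms have positive weight, so a descending
induction on the second weight reduces the claim to `G`. There the excluded monomials are produced
one by one from the fields `a^i b^j ∂/∂a`, `a^i b^j ∂/∂b`, `x^l y^i ∂/∂x`, `x^l y^i ∂/∂y`, the last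
two with `y = G`. Only the terms `s = 2` and `s = 3` of `G^p = ∑ C(p, s) a^(p-s) b^(ms) x^(ns)` are
coupled; they are separated by comparing `G^p` with `p b^m x^n G^(p-1)`.
-/

section WeightFiltration

variable {σ τ R M M' : Type*} [CommRing R] [AddCommMonoid M] [AddCommMonoid M'] {w : σ → M}
  {w' : τ → M} {r s t : M} {p q : MvPolynomial σ R}

theorem weightedHomogeneousComponent_mem_restrictSupport {s : Set (σ →₀ ℕ)}
    (hp : p ∈ restrictSupport R s) :
    weightedHomogeneousComponent w r p ∈ restrictSupport R s := by
  classical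
  refine (mem_restrictSupport_iff R).2 fun d hd => (mem_restrictSupport_iff R).1 hp ?_
  rw [Finset.mem_coe, mem_support_iff, coeff_weightedHomogeneousComponent] at hd
  exact mem_support_iff.2 (ite_ne_right_iff.1 hd).2

variable [PartialOrder M] [PartialOrder M']

variable (R) in
/-- The `r`-th step of the decreasing filtration of a polynomial ring by weighted order: the
polynomials all of whose monomials have `w`-weight at least `r`. The weights may lie in any ordered
monoid, so that `ℕ × ℤ` gives a bifiltration. -/
noncomputable def weightGE (w : σ → M) (r : M) : Submodule R (MvPolynomial σ R) :=
  restrictSupport R {d | r ≤ Finsupp.weight w d}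

theorem mem_weightGE : p ∈ weightGE R w r ↔ ∀ d ∈ p.support, r ≤ Finsupp.weight w d :=
  mem_restrictSupport_iff R

theorem weightGE_antitone : Antitone (weightGE R w) := fun _ _ h =>
  restrictSupport_mono R fun _ hd => h.trans hd

theorem monomial_mem_weightGE {d : σ →₀ ℕ} (h : r ≤ Finsupp.weight w d) (c : R) :
    monomial d c ∈ weightGE R w r :=
  (monomial_mem_restrictSupport R).2 (Or.inl h)

theorem weightGE_le {S : Submodule R (MvPolynomial σ R)}
    (h : ∀ d, r ≤ Finsupp.weight w d → monomial d 1 ∈ S) : weightGE R w r ≤ S := by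
  rw [weightGE, restrictSupport_eq_span, Submodule.span_le]
  rintro _ ⟨d, hd, rfl⟩
  exact h d hd

theorem one_mem_weightGE : (1 : MvPolynomial σ R) ∈ weightGE R w 0 :=
  monomial_mem_weightGE (map_zero _).ge 1

theorem X_mem_weightGE (i : σ) : (X i : MvPolynomial σ R) ∈ weightGE R w (w i) :=
  monomial_mem_weightGE (by rw [Finsupp.weight_single, one_smul]) 1

theorem weightGE_le_comp {f : M →+ M'} (hf : Monotone f) :
    weightGE R w r ≤ weightGE R (f ∘ w) (f r) :=
  restrictSupport_mono R fun d (hd : r ≤ _) => by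
    simpa [Finsupp.weight_apply, Finsupp.sum, map_sum] using hf hd

theorem mem_weightGE_of_isWeightedHomogeneous (hp : p.IsWeightedHomogeneous w r) :
    p ∈ weightGE R w r :=
  mem_weightGE.2 fun _ hd => (hp (mem_support_iff.1 hd)).ge

theorem exponent_induction {motive : (σ →₀ ℕ) → Prop} (zero : motive 0)
    (add_single : ∀ d i, motive d → motive (d + Finsupp.single i 1)) (d : σ →₀ ℕ) : motive d := by
  classical
  rw [← Finsupp.toMultiset_toFinsupp d]
  induction Finsupp.toMultiset d using Multiset.induction_on with
  | empty => rwa [map_zero]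
  | cons i s ih =>
    rw [← Multiset.singleton_add, map_add, Multiset.toFinsupp_singleton, add_comm]
    exact add_single _ i ih

theorem sub_sum_weightedHomogeneousComponent_mem_weightGE {w : σ → ℕ} {r : ℕ}
    (hp : p ∈ weightGE R w r) (ℓ : ℕ) :
    p - ∑ ν ∈ Finset.Icc r ℓ, weightedHomogeneousComponent w ν p ∈ weightGE R w (ℓ + 1) := by
  classical
  refine mem_weightGE.2 fun d hd => Nat.succ_le_of_lt (lt_of_not_ge fun hle => ?_)
  rw [mem_support_iff, coeff_sub, coeff_sum] at hd
  simp only [coeff_weightedHomogeneousComponent, Finset.sum_ite_eq, Finset.mem_Icc, hle,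
    and_true] at hd
  by_cases hr : r ≤ Finsupp.weight w d
  · simp [hr] at hd
  · exact hd (by simpa [hr] using mt (mem_weightGE.1 hp d) hr)

variable [IsOrderedAddMonoid M]

theorem mul_mem_weightGE (hp : p ∈ weightGE R w r) (hq : q ∈ weightGE R w s) :
    p * q ∈ weightGE R w (r + s) := by
  classical
  refine mem_weightGE.2 fun d hd => ?_
  obtain ⟨e, he, f, hf, rfl⟩ := Finset.mem_add.1 (support_mul p q hd)
  rw [map_add]
  exact add_le_add (mem_weightGE.1 hp e he) (mem_weightGE.1 hq f hf)

theorem pow_mem_weightGE (hp : p ∈ weightGE R w r) (n : ℕ) : p ^ n ∈ weightGE R w (n • r) := by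
  induction n with
  | zero => simpa using one_mem_weightGE
  | succ n ih => simpa only [pow_succ, succ_nsmul] using mul_mem_weightGE ih hp

theorem map_mem_weightGE (f : MvPolynomial σ R →ₗ[R] MvPolynomial τ R)
    (hf : ∀ d, f (monomial d 1) ∈ weightGE R w' (Finsupp.weight w d + s))
    (hp : p ∈ weightGE R w r) : f p ∈ weightGE R w' (r + s) := by
  have hspan : weightGE R w r ≤ (weightGE R w' (r + s)).comap f :=
    weightGE_le fun d hd => weightGE_antitone (add_le_add_left hd s) (hf d)
  exact hspan hp

theorem map_mem_weightGE_of_mul_X (f : MvPolynomial σ R →ₗ[R] MvPolynomial τ R)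
    (h_one : f 1 ∈ weightGE R w' s)
    (h_mul : ∀ q i r, q ∈ weightGE R w r → f q ∈ weightGE R w' (r + s) →
      f (q * X i) ∈ weightGE R w' (r + w i + s))
    (hp : p ∈ weightGE R w r) : f p ∈ weightGE R w' (r + s) := by
  refine map_mem_weightGE f (fun d => ?_) hp
  induction d using exponent_induction with
  | zero => simpa using h_one
  | add_single d i ih =>
    rw [monomial_add_single, pow_one, map_add, Finsupp.weight_single, one_smul]
    exact h_mul _ i _ (monomial_mem_weightGE le_rfl 1) ih

variable {u v : σ → MvPolynomial τ R} {φ δ : σ → MvPolynomial σ R}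

theorem aeval_mem_weightGE (hu : ∀ i, u i ∈ weightGE R w' (w i)) (hp : p ∈ weightGE R w r) :
    aeval u p ∈ weightGE R w' r := by
  rw [← add_zero r]
  refine map_mem_weightGE_of_mul_X (aeval u).toLinearMap ?_ (fun q i r _ hq => ?_) hp
  · simpa using one_mem_weightGE
  · simpa using mul_mem_weightGE hq (hu i)

theorem aeval_sub_aeval_mem_weightGE (hu : ∀ i, u i ∈ weightGE R w' (w i))
    (hv : ∀ i, v i ∈ weightGE R w' (w i)) (huv : ∀ i, u i - v i ∈ weightGE R w' (w i + s))
    (hp : p ∈ weightGE R w r) : aeval u p - aeval v p ∈ weightGE R w' (r + s) := by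
  let difference := (aeval (R := R) u).toLinearMap - (aeval v).toLinearMap
  suffices difference p ∈ weightGE R w' (r + s) from this
  refine map_mem_weightGE_of_mul_X difference (by simp [difference]) (fun q i r hq ih => ?_) hp
  have h₁ := mul_mem_weightGE ih (hu i)
  have h₂ := mul_mem_weightGE (aeval_mem_weightGE hv hq) (huv i)
  rw [add_right_comm] at h₁
  rw [← add_assoc] at h₂
  convert add_mem h₁ h₂ using 1
  simp only [difference, LinearMap.sub_apply, AlgHom.toLinearMap_apply, map_mul, aeval_X]
  ring

theorem mkDerivation_mem_weightGE (hδ : ∀ i, δ i ∈ weightGE R w (w i + s))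
    (hp : p ∈ weightGE R w r) : mkDerivation R δ p ∈ weightGE R w (r + s) := by
  refine map_mem_weightGE_of_mul_X (mkDerivation R δ).toLinearMap (by simp)
    (fun q i r hq ih => ?_) hp
  have h₁ := mul_mem_weightGE hq (hδ i)
  have h₂ := mul_mem_weightGE (X_mem_weightGE i) ih
  rw [← add_assoc] at h₁
  rw [add_left_comm, ← add_assoc] at h₂
  simpa [Derivation.leibniz] using add_mem h₁ h₂

theorem aeval_add_sub_mkDerivation_mem_weightGE (hs : 0 ≤ s) (hst : s ≤ t)
    (hu : ∀ i, φ i - X i ∈ weightGE R w (w i + s)) (hδ : ∀ i, δ i ∈ weightGE R w (w i + t))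
    (hp : p ∈ weightGE R w r) :
    aeval (φ + δ) p - aeval φ p - mkDerivation R δ p ∈ weightGE R w (r + (t + s)) := by
  have hu₀ i : φ i ∈ weightGE R w (w i) := by
    rw [← sub_add_cancel (φ i) (X i)]
    exact add_mem (weightGE_antitone (le_add_of_nonneg_right hs) (hu i)) (X_mem_weightGE i)
  have huδX i : φ i + δ i - X i ∈ weightGE R w (w i + s) := by
    rw [add_sub_right_comm]
    exact add_mem (hu i) (weightGE_antitone (add_le_add_right hst _) (hδ i))
  have huδ i : φ i + δ i ∈ weightGE R w (w i) :=
    add_mem (hu₀ i) (weightGE_antitone (le_add_of_nonneg_right (hs.trans hst)) (hδ i))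
  let remainder := (aeval (R := R) (φ + δ)).toLinearMap - (aeval φ).toLinearMap -
    (mkDerivation R δ : MvPolynomial σ R →ₗ[R] MvPolynomial σ R)
  suffices remainder p ∈ weightGE R w (r + (t + s)) by simpa [remainder] using this
  refine map_mem_weightGE_of_mul_X remainder (by simp [remainder]) (fun q i r hq ih => ?_) hp
  have h₁ := mul_mem_weightGE ih (huδ i)
  have h₂ := mul_mem_weightGE (mkDerivation_mem_weightGE hδ hq) (huδX i)
  have h₃ := mul_mem_weightGE (aeval_sub_aeval_mem_weightGE hu₀ X_mem_weightGE hu hq) (hδ i)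
  rw [add_right_comm] at h₁
  rw [add_add_add_comm] at h₂
  rw [add_add_add_comm, add_comm s t] at h₃
  convert add_mem (add_mem h₁ h₂) h₃ using 1
  simp only [remainder, LinearMap.sub_apply, AlgHom.toLinearMap_apply, Derivation.coeFn_coe,
    map_mul, aeval_X, Derivation.leibniz, mkDerivation_X, smul_eq_mul, Pi.add_apply,
    aeval_X_left_apply]
  ring

end WeightFiltration

section CoordinateChange

variable {R M : Type*} [CommRing R] [AddCommMonoid M] [PartialOrder M]
  {w : Fin 3 → M} {r s t μ : M}

variable (R) in
/-- The pairs `((ξ, η), (α, β))` of polynomial vector fields on the `(x, y)`-plane and on the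
`(a, b)`-plane. They encode the changes `X = x + ξ`, `Y = y + η`, `A = a + α`, `B = b + β`. -/
abbrev PlaneFields : Type _ :=
  (Fin 2 → MvPolynomial (Fin 2) R) × (Fin 2 → MvPolynomial (Fin 2) R)

variable (R) in
/-- The pairs of vector fields which raise weights by at least `μ`, where `a`, `b`, `x` have the
weights `w 0`, `w 1`, `w 2` and `y` has the weight of `a`. -/
noncomputable def planeFieldsGE (w : Fin 3 → M) (μ : M) : Submodule R (PlaneFields R) :=
  (Submodule.pi Set.univ fun i => weightGE R ![w 2, w 0] (![w 2, w 0] i + μ)).prod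
    (Submodule.pi Set.univ fun i => weightGE R ![w 0, w 1] (![w 0, w 1] i + μ))

/-- The displacement `(α(a, b), β(a, b), ξ(x, F))` of the point `(a, b, x)` of the hypersurface
`y = F(a, b, x)`. -/
noncomputable def displacement (F : MvPolynomial (Fin 3) R) :
    PlaneFields R →ₗ[R] Fin 3 → MvPolynomial (Fin 3) R where
  toFun θ := ![aeval ![X 0, X 1] (θ.2 0), aeval ![X 0, X 1] (θ.2 1), aeval ![X 2, F] (θ.1 0)]
  map_add' θ θ' := by ext i; fin_cases i <;> simp
  map_smul' c θ := by ext i; fin_cases i <;> simp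

/-- The defect `Y - G(A, B, X)` on the hypersurface `y = F(a, b, x)`: it vanishes when the change of
coordinates `θ` carries this hypersurface into `Y = G(A, B, X)`. -/
noncomputable def defect (F : MvPolynomial (Fin 3) R) (θ : PlaneFields R)
    (G : MvPolynomial (Fin 3) R) : MvPolynomial (Fin 3) R :=
  F + aeval ![X 2, F] (θ.1 1) - aeval (X + displacement F θ) G

/-- The derivative of `θ ↦ defect F θ F` at the identity change of coordinates: the infinitesimal
action of the vector fields on the defining function. -/
noncomputable def linearization (F : MvPolynomial (Fin 3) R) :
    PlaneFields R →ₗ[R] MvPolynomial (Fin 3) R where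
  toFun θ := aeval ![X 2, F] (θ.1 1) - mkDerivationEquiv R (displacement F θ) F
  map_add' θ θ' := by simp [add_sub_add_comm]
  map_smul' c θ := by simp [smul_sub]

variable {F F' G N : MvPolynomial (Fin 3) R} {θ θ' : PlaneFields R}

theorem linearization_apply : linearization F θ =
    aeval ![X 2, F] (θ.1 1) - mkDerivation R (displacement F θ) F := rfl

theorem X_mem_weightGE_source (i : Fin 2) :
    (![X 0, X 1] : Fin 2 → MvPolynomial (Fin 3) R) i ∈ weightGE R w (![w 0, w 1] i) := by
  fin_cases i <;> exact X_mem_weightGE _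

theorem graph_mem_weightGE (hF : F ∈ weightGE R w (w 0)) (i : Fin 2) :
    ![X 2, F] i ∈ weightGE R w (![w 2, w 0] i) := by
  fin_cases i
  exacts [X_mem_weightGE _, hF]

theorem graph_sub_graph_mem_weightGE (h : F - F' ∈ weightGE R w (w 0 + s)) (i : Fin 2) :
    ![X 2, F] i - ![X 2, F'] i ∈ weightGE R w (![w 2, w 0] i + s) := by
  fin_cases i
  · simp
  · exact h

theorem planeFieldsGE_le_comp {M' : Type*} [AddCommMonoid M'] [PartialOrder M'] {f : M →+ M'}
    (hf : Monotone f) : planeFieldsGE R w μ ≤ planeFieldsGE R (f ∘ w) (f μ) := by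
  have hpair (c d : M) : f ∘ ![c, d] = ![f c, f d] := funext fun i => by fin_cases i <;> rfl
  refine Submodule.prod_mono (Submodule.pi_mono fun i _ => ?_) (Submodule.pi_mono fun i _ => ?_)
  all_goals
    refine (weightGE_le_comp hf).trans_eq ?_
    fin_cases i <;> simp [hpair]

variable [IsOrderedAddMonoid M]

theorem planeFieldsGE_antitone : Antitone (planeFieldsGE R w) := fun _ _ h =>
  Submodule.prod_mono
    (Submodule.pi_mono fun _ _ => weightGE_antitone (add_le_add_right h _))
    (Submodule.pi_mono fun _ _ => weightGE_antitone (add_le_add_right h _))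

theorem displacement_mem_weightGE (hF : F ∈ weightGE R w (w 0)) (hθ : θ ∈ planeFieldsGE R w μ)
    (i : Fin 3) : displacement F θ i ∈ weightGE R w (w i + μ) := by
  obtain ⟨hsource, htarget⟩ := hθ
  fin_cases i
  · exact aeval_mem_weightGE X_mem_weightGE_source (htarget 0 trivial)
  · exact aeval_mem_weightGE X_mem_weightGE_source (htarget 1 trivial)
  · exact aeval_mem_weightGE (graph_mem_weightGE hF) (hsource 0 trivial)

theorem X_add_displacement_mem_weightGE (hμ : 0 ≤ μ) (hF : F ∈ weightGE R w (w 0))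
    (hθ : θ ∈ planeFieldsGE R w μ) (i : Fin 3) : X i + displacement F θ i ∈ weightGE R w (w i) :=
  add_mem (X_mem_weightGE i)
    (weightGE_antitone (le_add_of_nonneg_right hμ) (displacement_mem_weightGE hF hθ i))

theorem displacement_sub_displacement_mem_weightGE (hF : F ∈ weightGE R w (w 0))
    (hF' : F' ∈ weightGE R w (w 0)) (h : F - F' ∈ weightGE R w (w 0 + s))
    (hθ : θ ∈ planeFieldsGE R w μ) (i : Fin 3) :
    displacement F θ i - displacement F' θ i ∈ weightGE R w (w i + (μ + s)) := by
  fin_cases i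
  · simp [displacement]
  · simp [displacement]
  · rw [← add_assoc]
    exact aeval_sub_aeval_mem_weightGE (graph_mem_weightGE hF) (graph_mem_weightGE hF')
      (graph_sub_graph_mem_weightGE h) (hθ.1 0 trivial)

theorem linearization_sub_linearization_mem_weightGE (hF : F ∈ weightGE R w (w 0))
    (hF' : F' ∈ weightGE R w (w 0)) (h : F - F' ∈ weightGE R w (w 0 + s))
    (hθ : θ ∈ planeFieldsGE R w μ) :
    linearization F θ - linearization F' θ ∈ weightGE R w (w 0 + (μ + s)) := by
  have hη := aeval_sub_aeval_mem_weightGE (graph_mem_weightGE hF) (graph_mem_weightGE hF')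
    (graph_sub_graph_mem_weightGE h) (hθ.1 1 trivial)
  have hdisp := mkDerivation_mem_weightGE
    (displacement_sub_displacement_mem_weightGE hF hF' h hθ) hF
  have hfun := mkDerivation_mem_weightGE (displacement_mem_weightGE hF' hθ) h
  rw [add_right_comm] at hfun
  rw [add_assoc] at hη hfun
  have hderiv : mkDerivation R (displacement F θ - displacement F' θ) =
      mkDerivation R (displacement F θ) - mkDerivation R (displacement F' θ) :=
    map_sub (mkDerivationEquiv R) _ _
  have hsplit : linearization F θ - linearization F' θ =
      aeval ![X 2, F] (θ.1 1) - aeval ![X 2, F'] (θ.1 1) -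
        mkDerivation R (displacement F θ - displacement F' θ) F -
        mkDerivation R (displacement F' θ) (F - F') := by
    rw [hderiv, linearization_apply, linearization_apply, Derivation.sub_apply, map_sub]
    ring
  rw [hsplit]
  exact sub_mem (sub_mem hη hdisp) hfun

/- Moving the coordinates by `-θ'` and the target by `N` changes the defect, to first order, by
`-linearization F θ' - N`; all other terms are products of two small ones. -/
theorem defect_sub_mem_weightGE (hs : 0 ≤ s) (hsμ : s ≤ μ) (hF : F ∈ weightGE R w (w 0))
    (hFG : F - G ∈ weightGE R w (w 0 + s)) (hθ : θ ∈ planeFieldsGE R w s)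
    (hθ' : θ' ∈ planeFieldsGE R w μ) (hN : N ∈ weightGE R w (w 0 + μ)) :
    defect F (θ - θ') (G + N) - (defect F θ G - linearization F θ' - N) ∈
      weightGE R w (w 0 + (μ + s)) := by
  have hG : G ∈ weightGE R w (w 0) := by
    rw [← sub_sub_cancel F G]
    exact sub_mem hF (weightGE_antitone (le_add_of_nonneg_right hs) hFG)
  have hdisp i : (X + displacement F θ : Fin 3 → MvPolynomial (Fin 3) R) i - X i ∈
      weightGE R w (w i + s) := by
    simpa using displacement_mem_weightGE hF hθ i
  have hdisp_neg := displacement_mem_weightGE hF (neg_mem hθ')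
  have hθθ' : θ - θ' ∈ planeFieldsGE R w s := sub_mem hθ (planeFieldsGE_antitone hsμ hθ')
  have hdisp_sub i : X i + displacement F (θ - θ') i - X i ∈ weightGE R w (w i + s) := by
    simpa using displacement_mem_weightGE hF hθθ' i
  have hG_taylor := aeval_add_sub_mkDerivation_mem_weightGE hs hsμ hdisp hdisp_neg hG
  have hFG_move := mkDerivation_mem_weightGE hdisp_neg hFG
  have hN_move := aeval_sub_aeval_mem_weightGE (X_add_displacement_mem_weightGE hs hF hθθ')
    X_mem_weightGE hdisp_sub hN
  rw [add_right_comm, add_assoc] at hFG_move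
  rw [add_assoc] at hN_move
  have hsplit : defect F (θ - θ') (G + N) - (defect F θ G - linearization F θ' - N) =
      mkDerivation R (displacement F (-θ')) (F - G) -
        (aeval (X + displacement F θ + displacement F (-θ')) G - aeval (X + displacement F θ) G -
          mkDerivation R (displacement F (-θ')) G) -
        (aeval (X + displacement F (θ - θ')) N - aeval X N) := by
    have hderiv : mkDerivation R (displacement F (-θ')) = -mkDerivation R (displacement F θ') := by
      rw [map_neg]
      exact map_neg (mkDerivationEquiv R) _
    rw [hderiv, add_assoc, ← map_add, ← sub_eq_add_neg, defect, defect, linearization_apply]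
    simp only [map_add, map_sub, Derivation.neg_apply, aeval_X_left_apply, Prod.fst_sub,
      Pi.sub_apply]
    ring
  rw [hsplit]
  exact sub_mem (sub_mem hFG_move hG_taylor) hN_move

theorem X_pow_mul_X_pow_mem_weightGE {w : Fin 2 → M} {i j : ℕ} (h : r ≤ i • w 0 + j • w 1) :
    (X 0 ^ i * X 1 ^ j : MvPolynomial (Fin 2) R) ∈ weightGE R w r :=
  weightGE_antitone h <| mul_mem_weightGE (pow_mem_weightGE (X_mem_weightGE 0) i)
    (pow_mem_weightGE (X_mem_weightGE 1) j)

theorem X_pow_mul_X_pow_mul_X_pow_mem_weightGE {i j l : ℕ} (h : r ≤ i • w 0 + j • w 1 + l • w 2) :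
    (X 0 ^ i * X 1 ^ j * X 2 ^ l : MvPolynomial (Fin 3) R) ∈ weightGE R w r :=
  weightGE_antitone h <| mul_mem_weightGE
    (mul_mem_weightGE (pow_mem_weightGE (X_mem_weightGE 0) i)
      (pow_mem_weightGE (X_mem_weightGE 1) j))
    (pow_mem_weightGE (X_mem_weightGE 2) l)

theorem monomial_eq_X_pow_mul_X_pow_mul_X_pow (d : Fin 3 →₀ ℕ) :
    (monomial d 1 : MvPolynomial (Fin 3) R) = X 0 ^ d 0 * X 1 ^ d 1 * X 2 ^ d 2 := by
  simp [monomial_eq, Finsupp.prod_fintype, Fin.prod_univ_three]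

end CoordinateChange

section LinearAlgebra

variable {K V ι : Type*}

theorem mem_of_sum_mem [Ring K] [AddCommGroup V] [Module K V] {S : Submodule K V} {I : Finset ι}
    {u : ι → V} {i : ι} (hi : i ∈ I) (h : ∀ j ∈ I, j ≠ i → u j ∈ S) (hsum : ∑ j ∈ I, u j ∈ S) :
    u i ∈ S := by
  classical
  rw [← Finset.add_sum_erase I u hi] at hsum
  refine (S.add_mem_iff_left (S.sum_mem fun j hj => ?_)).1 hsum
  exact h j (Finset.mem_of_mem_erase hj) (Finset.ne_of_mem_erase hj)

theorem mem_of_sum_mem_of_sum_smul_mem [DivisionRing K] [AddCommGroup V] [Module K V]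
    {S : Submodule K V} {I : Finset ι} {u : ι → V} {c : ι → K} {i j : ι} (hi : i ∈ I)
    (hij : c i ≠ c j) (h : ∀ s ∈ I, s ≠ i → s ≠ j → u s ∈ S) (hsum : ∑ s ∈ I, u s ∈ S)
    (hsum_smul : ∑ s ∈ I, c s • u s ∈ S) : u i ∈ S := by
  refine (S.smul_mem_iff (sub_ne_zero.2 hij)).1
    (mem_of_sum_mem (u := fun s => (c s - c j) • u s) hi (fun s hs hsi => ?_) ?_)
  · obtain rfl | hsj := eq_or_ne s j
    · simp
    · exact S.smul_mem _ (h s hs hsi hsj)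
  · simpa only [sub_smul, Finset.sum_sub_distrib, Finset.smul_sum] using
      S.sub_mem hsum_smul (S.smul_mem (c j) hsum)

end LinearAlgebra

section Model

variable {R : Type*} [CommRing R] {m n : ℕ} {μ : ℕ × ℤ}

/-- The weights `m + n`, `1`, `1` of `a`, `b`, `x`, for which the normal form is graded. -/
def singWeight (m n : ℕ) : Fin 3 → ℕ := ![m + n, 1, 1]

/-- The refinement of `singWeight` by the grading `n j - m l` of `a^i b^j x^l`. The model
`a + b^m x^n` is still homogeneous for it, while the terms `b^j x^(m+n-j)` with `m < j` have
strictly larger second weight. -/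
def biWeight (m n : ℕ) : Fin 3 → ℕ × ℤ := ![(m + n, 0), (1, n), (1, -m)]

variable (R m n) in
/-- The model `a + b^m x^n`. -/
noncomputable def modelJet : MvPolynomial (Fin 3) R := X 0 + X 1 ^ m * X 2 ^ n

variable (R m n) in
/-- The polynomials without the monomials excluded by the normal form. -/
noncomputable def normalForms : Submodule R (MvPolynomial (Fin 3) R) :=
  restrictSupport R {d | ¬SingNonNormal m n d}

variable (R m n μ) in
/-- What the infinitesimal action on the model produces from the vector fields which raise
biweights by `μ`, together with the normal forms of the same order. -/
noncomputable def modelReach : Submodule R (MvPolynomial (Fin 3) R) :=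
  (planeFieldsGE R (biWeight m n) μ).map (linearization (modelJet R m n)) ⊔
    normalForms R m n ⊓ weightGE R (biWeight m n) (biWeight m n 0 + μ)

theorem biWeight_zero_eq : biWeight m n 0 = m • biWeight m n 1 + n • biWeight m n 2 := by
  ext <;> simp [biWeight, mul_comm]

theorem linearization_modelJet (θ : PlaneFields R) :
    linearization (modelJet R m n) θ = aeval ![X 2, modelJet R m n] (θ.1 1) -
      aeval ![X 0, X 1] (θ.2 0) -
      (m : R) • (X 1 ^ (m - 1) * X 2 ^ n * aeval ![X 0, X 1] (θ.2 1)) -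
      (n : R) • (X 1 ^ m * X 2 ^ (n - 1) * aeval ![X 2, modelJet R m n] (θ.1 0)) := by
  rw [linearization_apply]
  nth_rw 3 [modelJet]
  simp only [displacement, LinearMap.coe_mk, AddHom.coe_mk, map_add, mkDerivation_X,
    Derivation.leibniz, Derivation.leibniz_pow, Matrix.cons_val, smul_eq_mul, nsmul_eq_mul,
    smul_eq_C_mul, map_natCast]
  ring

variable {i j l : ℕ}

theorem linearization_mem_modelReach {θ : PlaneFields R}
    (hθ : θ ∈ planeFieldsGE R (biWeight m n) μ) :
    linearization (modelJet R m n) θ ∈ modelReach R m n μ :=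
  Submodule.mem_sup_left (Submodule.mem_map_of_mem hθ)

theorem alpha_mem_modelReach
    (h : biWeight m n 0 + μ ≤ i • biWeight m n 0 + j • biWeight m n 1) :
    X 0 ^ i * X 1 ^ j ∈ modelReach R m n μ := by
  have hθ : (0, ![X 0 ^ i * X 1 ^ j, 0]) ∈ planeFieldsGE R (biWeight m n) μ := by
    refine ⟨zero_mem _, fun s _ => ?_⟩
    fin_cases s
    exacts [X_pow_mul_X_pow_mem_weightGE h, zero_mem _]
  simpa [linearization_modelJet] using linearization_mem_modelReach hθ

theorem eta_mem_modelReach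
    (h : biWeight m n 0 + μ ≤ i • biWeight m n 0 + l • biWeight m n 2) :
    modelJet R m n ^ i * X 2 ^ l ∈ modelReach R m n μ := by
  have hθ : (![0, X 0 ^ l * X 1 ^ i], 0) ∈ planeFieldsGE R (biWeight m n) μ := by
    refine ⟨fun s _ => ?_, zero_mem _⟩
    fin_cases s
    exacts [zero_mem _, X_pow_mul_X_pow_mem_weightGE (h.trans_eq (add_comm _ _))]
  simpa [linearization_modelJet, mul_comm] using linearization_mem_modelReach hθ

theorem modelJet_pow_mul (i j l : ℕ) :
    modelJet R m n ^ i * (X 1 ^ j * X 2 ^ l) = ∑ s ∈ Finset.range (i + 1),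
      (i.choose s : R) • (X 0 ^ (i - s) * X 1 ^ (m * s + j) * X 2 ^ (n * s + l)) := by
  rw [modelJet, add_comm, add_pow, Finset.sum_mul]
  refine Finset.sum_congr rfl fun s _ => ?_
  simp only [smul_eq_C_mul, map_natCast, pow_add, mul_pow, pow_mul]
  ring

theorem smul_modelJet_pow_mul (p : ℕ) :
    (p : R) • (modelJet R m n ^ (p - 1) * (X 1 ^ m * X 2 ^ n)) = ∑ s ∈ Finset.range (p + 1),
      (s : R) • ((p.choose s : R) • (X 0 ^ (p - s) * X 1 ^ (m * s) * X 2 ^ (n * s))) := by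
  cases p with
  | zero => simp
  | succ q =>
    rw [Finset.sum_range_succ', Nat.add_sub_cancel, modelJet_pow_mul, Finset.smul_sum,
      Nat.cast_zero, zero_smul, add_zero]
    refine Finset.sum_congr rfl fun s _ => ?_
    rw [smul_smul, smul_smul, ← Nat.cast_mul, ← Nat.cast_mul, Nat.add_one_mul_choose_eq, mul_comm,
      Nat.add_sub_add_right, mul_add_one, mul_add_one, mul_comm (s + 1)]

theorem normal_mem_modelReach (h : biWeight m n 0 + μ =
      i • biWeight m n 0 + j • biWeight m n 1 + l • biWeight m n 2)
    (hnormal : ¬SingNonNormal m n (Finsupp.equivFunOnFinite.symm ![i, j, l])) :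
    X 0 ^ i * X 1 ^ j * X 2 ^ l ∈ modelReach R m n μ := by
  refine Submodule.mem_sup_right ⟨?_, X_pow_mul_X_pow_mul_X_pow_mem_weightGE h.le⟩
  have hmem : monomial _ 1 ∈ normalForms R m n :=
    (monomial_mem_restrictSupport R).2 (Or.inl hnormal)
  rwa [monomial_eq_X_pow_mul_X_pow_mul_X_pow] at hmem

theorem shifted_weight_eq {s : ℕ} (hs : s ≤ i) : (i - s) • biWeight m n 0 +
      (m * s + j) • biWeight m n 1 + (n * s + l) • biWeight m n 2 =
    i • biWeight m n 0 + j • biWeight m n 1 + l • biWeight m n 2 := by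
  obtain ⟨t, rfl⟩ := Nat.exists_eq_add_of_le' hs
  rw [Nat.add_sub_cancel, biWeight_zero_eq]
  module

/- In the expansion of `(a + b^m x^n)^i b^j x^l` the monomial `a^i b^j x^l` is the only one which
is not divisible by `b^(m+j) x^(n+l)`. -/
theorem mem_modelReach_of_modelJet_pow_mul_mem
    (hmodel : modelJet R m n ^ i * (X 1 ^ j * X 2 ^ l) ∈ modelReach R m n μ)
    (hrest : ∀ s ≤ i, s ≠ 0 →
      X 0 ^ (i - s) * X 1 ^ (m * s + j) * X 2 ^ (n * s + l) ∈ modelReach R m n μ) :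
    X 0 ^ i * X 1 ^ j * X 2 ^ l ∈ modelReach R m n μ := by
  rw [modelJet_pow_mul] at hmodel
  simpa using mem_of_sum_mem (i := 0) (by simp)
    (fun s hs hs0 => Submodule.smul_mem _ _ (hrest s (Finset.mem_range_succ_iff.1 hs) hs0)) hmodel

theorem not_singNonNormal (hj : j ≠ 0) (hl : l ≠ 0) (hjm : j ≠ m) (hln : l ≠ n)
    (h : ∀ s ∈ ({2, 3} : Finset ℕ), ¬(j = m * s ∧ l = n * s)) :
    ¬SingNonNormal m n (Finsupp.equivFunOnFinite.symm ![i, j, l]) := by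
  simp only [Finset.mem_insert, Finset.mem_singleton, forall_eq_or_imp, forall_eq] at h
  change ¬(j = 0 ∨ l = 0 ∨ j = m ∧ n - 1 ≤ l ∨ l = n ∧ m - 1 ≤ j ∨ j = 2 * m ∧ l = 2 * n ∨
    j = 3 * m ∧ l = 3 * n ∨ m = 1 ∧ j = 1 ∧ l = 2 * n ∨ n = 1 ∧ j = 2 * m ∧ l = 1)
  lia

variable {K : Type*} [Field K] [CharZero K]

theorem beta_mem_modelReach (hm : m ≠ 0) (hj : m - 1 ≤ j) (h : biWeight m n 0 + μ =
      i • biWeight m n 0 + j • biWeight m n 1 + n • biWeight m n 2) :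
    X 0 ^ i * X 1 ^ j * X 2 ^ n ∈ modelReach K m n μ := by
  obtain ⟨j, rfl⟩ := Nat.exists_eq_add_of_le hj
  have hweight : biWeight m n 1 + μ = i • biWeight m n 0 + j • biWeight m n 1 := by
    refine add_left_cancel (a := (m - 1) • biWeight m n 1 + n • biWeight m n 2) ?_
    calc _ = (m - 1 + 1) • biWeight m n 1 + n • biWeight m n 2 + μ := by module
      _ = biWeight m n 0 + μ := by rw [Nat.sub_add_cancel (by lia), ← biWeight_zero_eq]
      _ = _ := h
      _ = _ := by module
  have hθ : (0, ![0, X 0 ^ i * X 1 ^ j]) ∈ planeFieldsGE K (biWeight m n) μ := by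
    refine ⟨zero_mem _, fun s _ => ?_⟩
    fin_cases s
    exacts [zero_mem _, X_pow_mul_X_pow_mem_weightGE hweight.le]
  have hlin : linearization (modelJet K m n) (0, ![0, X 0 ^ i * X 1 ^ j]) =
      -((m : K) • (X 0 ^ i * X 1 ^ (m - 1 + j) * X 2 ^ n)) := by
    simp only [linearization_modelJet, Pi.zero_apply, map_zero, Matrix.cons_val_zero,
      Matrix.cons_val_one, map_mul, map_pow, aeval_X, smul_eq_C_mul, pow_add]
    ring
  rw [← Submodule.smul_mem_iff _ (Nat.cast_ne_zero (R := K).2 hm), ← neg_mem_iff, ← hlin]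
  exact linearization_mem_modelReach hθ

theorem xi_mem_modelReach (hn : n ≠ 0) (hl : n - 1 ≤ l) (h : biWeight m n 0 + μ =
      i • biWeight m n 0 + m • biWeight m n 1 + l • biWeight m n 2) :
    modelJet K m n ^ i * (X 1 ^ m * X 2 ^ l) ∈ modelReach K m n μ := by
  obtain ⟨l, rfl⟩ := Nat.exists_eq_add_of_le hl
  have hweight : biWeight m n 2 + μ = l • biWeight m n 2 + i • biWeight m n 0 := by
    refine add_left_cancel (a := m • biWeight m n 1 + (n - 1) • biWeight m n 2) ?_
    calc _ = m • biWeight m n 1 + (n - 1 + 1) • biWeight m n 2 + μ := by module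
      _ = biWeight m n 0 + μ := by rw [Nat.sub_add_cancel (by lia), ← biWeight_zero_eq]
      _ = _ := h
      _ = _ := by module
  have hθ : (![X 0 ^ l * X 1 ^ i, 0], 0) ∈ planeFieldsGE K (biWeight m n) μ := by
    refine ⟨fun s _ => ?_, zero_mem _⟩
    fin_cases s
    exacts [X_pow_mul_X_pow_mem_weightGE hweight.le, zero_mem _]
  have hlin : linearization (modelJet K m n) (![X 0 ^ l * X 1 ^ i, 0], 0) =
      -((n : K) • (modelJet K m n ^ i * (X 1 ^ m * X 2 ^ (n - 1 + l)))) := by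
    simp only [linearization_modelJet, Pi.zero_apply, map_zero, Matrix.cons_val_zero,
      Matrix.cons_val_one, map_mul, map_pow, aeval_X, smul_eq_C_mul, pow_add]
    ring
  rw [← Submodule.smul_mem_iff _ (Nat.cast_ne_zero (R := K).2 hn), ← neg_mem_iff, ← hlin]
  exact linearization_mem_modelReach hθ

theorem monomial_m_mem_modelReach (hm : m ≠ 0) (hn : n ≠ 0) (hl : n - 1 ≤ l)
    (h : biWeight m n 0 + μ =
      i • biWeight m n 0 + m • biWeight m n 1 + l • biWeight m n 2) :
    X 0 ^ i * X 1 ^ m * X 2 ^ l ∈ modelReach K m n μ := by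
  obtain rfl | hl₀ := eq_or_ne l 0
  · simpa using alpha_mem_modelReach (R := K) (i := i) (j := m) (h.le.trans_eq (by simp))
  obtain rfl | hln := eq_or_ne l n
  · exact beta_mem_modelReach hm (Nat.sub_le m 1) h
  refine mem_modelReach_of_modelJet_pow_mul_mem (xi_mem_modelReach hn hl h) fun s hs hs₀ =>
    normal_mem_modelReach (h.trans (shifted_weight_eq hs).symm) ?_
  have hms : m ≤ m * s := Nat.le_mul_of_pos_right m (Nat.pos_of_ne_zero hs₀)
  have hns : n ≤ n * s := Nat.le_mul_of_pos_right n (Nat.pos_of_ne_zero hs₀)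
  refine not_singNonNormal (by lia) (by lia) (by lia) (by lia) ?_
  rintro r - ⟨hmr, hnr⟩
  obtain rfl : s + 1 = r := Nat.eq_of_mul_eq_mul_left (Nat.pos_of_ne_zero hm) hmr
  exact hln (Nat.add_left_cancel hnr)

theorem monomial_zero_mem_modelReach (hm : m ≠ 0) (hn : n ≠ 0)
    (h : biWeight m n 0 + μ =
      i • biWeight m n 0 + 0 • biWeight m n 1 + l • biWeight m n 2) :
    X 0 ^ i * X 1 ^ 0 * X 2 ^ l ∈ modelReach K m n μ := by
  obtain rfl | hl₀ := eq_or_ne l 0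
  · simpa using alpha_mem_modelReach (R := K) (i := i) (j := 0) (h.le.trans_eq (by simp))
  have hmodel : modelJet K m n ^ i * (X 1 ^ 0 * X 2 ^ l) ∈ modelReach K m n μ := by
    simpa using eta_mem_modelReach (h.le.trans_eq (by simp))
  refine mem_modelReach_of_modelJet_pow_mul_mem hmodel fun s hs hs₀ => ?_
  have hshift := h.trans (shifted_weight_eq hs).symm
  obtain rfl | hs₁ := eq_or_ne s 1
  · rw [mul_one, add_zero] at hshift ⊢
    exact monomial_m_mem_modelReach hm hn (by lia) hshift
  have hns : n * 2 ≤ n * s := Nat.mul_le_mul_left n (by lia)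
  have hms : m * 2 ≤ m * s := Nat.mul_le_mul_left m (by lia)
  refine normal_mem_modelReach hshift
    (not_singNonNormal (by lia) (by lia) (by lia) (by lia) ?_)
  rintro r - ⟨hmr, hnr⟩
  obtain rfl : s = r := Nat.eq_of_mul_eq_mul_left (Nat.pos_of_ne_zero hm) hmr
  exact hl₀ (Nat.add_eq_left.1 hnr)

theorem nonresonant_mem_modelReach (hm : m ≠ 0) (hn : n ≠ 0) {p s : ℕ} (hs : s ≤ p)
    (h : biWeight m n 0 + μ = p • biWeight m n 0) (hs₂ : s ≠ 2) (hs₃ : s ≠ 3) :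
    X 0 ^ (p - s) * X 1 ^ (m * s) * X 2 ^ (n * s) ∈ modelReach K m n μ := by
  have hweight : biWeight m n 0 + μ = (p - s) • biWeight m n 0 +
      (m * s) • biWeight m n 1 + (n * s) • biWeight m n 2 := by
    simpa [h] using (shifted_weight_eq (j := 0) (l := 0) hs).symm
  obtain rfl | hs₀ := eq_or_ne s 0
  · exact monomial_zero_mem_modelReach hm hn hweight
  obtain rfl | hs₁ := eq_or_ne s 1
  · rw [mul_one, mul_one] at hweight ⊢
    exact monomial_m_mem_modelReach hm hn (Nat.sub_le n 1) hweight
  refine normal_mem_modelReach hweight (not_singNonNormal ?_ ?_ ?_ ?_ ?_)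
  · simp [hm, hs₀]
  · simp [hn, hs₀]
  · simp [hm, hs₁]
  · simp [hn, hs₁]
  · simp [hm, hs₂, hs₃]

/- Besides the model power `G^p = ∑ C(p, s) T_s`, `T_s = a^(p-s) b^(ms) x^(ns)`, the field
`x y^(p-1) ∂/∂x` contributes `p b^m x^n G^(p-1) = ∑ s C(p, s) T_s`. The two relations determine the
two terms `s = 2, 3`. -/
theorem resonant_mem_modelReach (hm : m ≠ 0) (hn : n ≠ 0) {p s : ℕ} (hs : s ≤ p)
    (h : biWeight m n 0 + μ = p • biWeight m n 0) (hs₂₃ : s = 2 ∨ s = 3) :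
    X 0 ^ (p - s) * X 1 ^ (m * s) * X 2 ^ (n * s) ∈ modelReach K m n μ := by
  let u (r : ℕ) : MvPolynomial (Fin 3) K :=
    (p.choose r : K) • (X 0 ^ (p - r) * X 1 ^ (m * r) * X 2 ^ (n * r))
  have hpower : ∑ r ∈ Finset.range (p + 1), u r ∈ modelReach K m n μ := by
    have hexpand := modelJet_pow_mul (R := K) (m := m) (n := n) p 0 0
    simp only [pow_zero, mul_one, add_zero] at hexpand
    rw [← hexpand]
    simpa using eta_mem_modelReach (R := K) (i := p) (l := 0) (h.le.trans_eq (by simp))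
  have heuler : ∑ r ∈ Finset.range (p + 1), (r : K) • u r ∈ modelReach K m n μ := by
    rw [← smul_modelJet_pow_mul]
    refine Submodule.smul_mem _ _ (xi_mem_modelReach hn (Nat.sub_le n 1) ?_)
    rw [h, add_assoc, ← biWeight_zero_eq, ← succ_nsmul, Nat.sub_add_cancel (by lia)]
  have hother : (s : K) ≠ (5 - s : ℕ) := Nat.cast_injective.ne (by lia)
  refine (Submodule.smul_mem_iff _ (Nat.cast_ne_zero.2 (Nat.choose_pos hs).ne')).1
    (mem_of_sum_mem_of_sum_smul_mem (u := u) (by simpa using hs) hother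
      (fun r hr hrs hr' => Submodule.smul_mem _ _ ?_) hpower heuler)
  exact nonresonant_mem_modelReach hm hn (by simpa using hr) h (by lia) (by lia)

theorem monomial_mem_modelReach (hm : m ≠ 0) (hn : n ≠ 0)
    (h : biWeight m n 0 + μ =
      i • biWeight m n 0 + j • biWeight m n 1 + l • biWeight m n 2) :
    X 0 ^ i * X 1 ^ j * X 2 ^ l ∈ modelReach K m n μ := by
  by_cases hnormal : SingNonNormal m n (Finsupp.equivFunOnFinite.symm ![i, j, l])
  swap
  · exact normal_mem_modelReach h hnormal
  have hresonant {s} (hs : s = 2 ∨ s = 3) (hj : j = s * m) (hl : l = s * n) :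
      X 0 ^ i * X 1 ^ j * X 2 ^ l ∈ modelReach K m n μ := by
    subst hj hl
    have hp : biWeight m n 0 + μ = (i + s) • biWeight m n 0 := by
      rw [h, add_smul, biWeight_zero_eq]
      module
    simpa [mul_comm] using resonant_mem_modelReach (K := K) hm hn (Nat.le_add_left s i) hp hs
  rcases hnormal with hj | hl | ⟨hj, hl⟩ | ⟨hl, hj⟩ | ⟨hj, hl⟩ | ⟨hj, hl⟩ | ⟨hm₁, hj, hl⟩ |
    ⟨hn₁, hj, hl⟩
  · obtain rfl : j = 0 := hj
    exact monomial_zero_mem_modelReach hm hn h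
  · obtain rfl : l = 0 := hl
    simpa using alpha_mem_modelReach (R := K) (i := i) (j := j) (h.le.trans_eq (by simp))
  · obtain rfl : j = m := hj
    exact monomial_m_mem_modelReach hm hn hl h
  · obtain rfl : l = n := hl
    exact beta_mem_modelReach hm hj h
  · exact hresonant (Or.inl rfl) hj hl
  · exact hresonant (Or.inr rfl) hj hl
  · obtain rfl : j = m := hj.trans hm₁.symm
    obtain rfl : l = 2 * n := hl
    exact monomial_m_mem_modelReach hm hn (by lia) h
  · obtain rfl : l = n := hl.trans hn₁.symm
    obtain rfl : j = 2 * m := hj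
    exact beta_mem_modelReach hm (by lia) h

end Model

section SingularJet

variable {R : Type*} [CommRing R] {m n : ℕ} {γ : ℕ → R} {t : ℕ}

/-- The part `a + b^m x^n + ∑ γ_j b^j x^(m+n-j)`, `m < j < m + n`, of lowest weight. -/
noncomputable def singularJet (m n : ℕ) (γ : ℕ → R) : MvPolynomial (Fin 3) R :=
  X 0 + X 1 ^ m * X 2 ^ n +
    ∑ j ∈ Finset.Icc (m + 1) (m + n - 1), C (γ j) * X 1 ^ j * X 2 ^ (m + n - j)

variable (m n γ t) in
/-- What the infinitesimal action on the singular jet produces from the vector fields which raise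
weights by `t`, together with the normal forms of the same order, modulo higher order. -/
noncomputable def jetReach : Submodule R (MvPolynomial (Fin 3) R) :=
  (planeFieldsGE R (singWeight m n) t).map (linearization (singularJet m n γ)) ⊔
    normalForms R m n ⊓ weightGE R (singWeight m n) (singWeight m n 0 + t) ⊔
    weightGE R (singWeight m n) (singWeight m n 0 + (t + 1))

theorem fst_comp_biWeight : Prod.fst ∘ biWeight m n = singWeight m n := by
  ext i
  fin_cases i <;> rfl

theorem fst_weight_biWeight (d : Fin 3 →₀ ℕ) :
    (Finsupp.weight (biWeight m n) d).1 = Finsupp.weight (singWeight m n) d := by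
  simp [Finsupp.weight_eq_sum, Fin.sum_univ_three, biWeight, singWeight]

theorem snd_weight_biWeight_le (d : Fin 3 →₀ ℕ) :
    (Finsupp.weight (biWeight m n) d).2 ≤ n * Finsupp.weight (singWeight m n) d := by
  have h : (0 : ℤ) ≤ n * d 0 * (m + n) + n * d 2 + d 2 * m := by positivity
  have hbi : (Finsupp.weight (biWeight m n) d).2 = d 1 * n - d 2 * m := by
    simp [Finsupp.weight_eq_sum, Fin.sum_univ_three, biWeight, sub_eq_add_neg]
  have hsing : (Finsupp.weight (singWeight m n) d : ℤ) = d 0 * (m + n) + d 1 + d 2 := by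
    simp [Finsupp.weight_eq_sum, Fin.sum_univ_three, singWeight]
  rw [hbi, hsing]
  linarith

theorem weightGE_biWeight_le (μ : ℕ × ℤ) :
    weightGE R (biWeight m n) μ ≤ weightGE R (singWeight m n) μ.1 := by
  simpa [fst_comp_biWeight] using
    weightGE_le_comp (R := R) (w := biWeight m n) (r := μ) (f := AddMonoidHom.fst ℕ ℤ) monotone_fst

theorem planeFieldsGE_biWeight_le (μ : ℕ × ℤ) :
    planeFieldsGE R (biWeight m n) μ ≤ planeFieldsGE R (singWeight m n) μ.1 := by
  simpa [fst_comp_biWeight] using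
    planeFieldsGE_le_comp (R := R) (w := biWeight m n) (μ := μ) (f := AddMonoidHom.fst ℕ ℤ)
      monotone_fst

theorem two_le_of_mem_planeFieldsGE {θ : PlaneFields R} (hm : m ≠ 0)
    (hθ : θ ∈ planeFieldsGE R (singWeight m n) 1) (i : Fin 2) :
    (∀ d ∈ (θ.1 i).support, 2 ≤ d 0 + (m + n) * d 1) ∧
      ∀ d ∈ (θ.2 i).support, 2 ≤ (m + n) * d 0 + d 1 := by
  have hk : 1 ≤ m + n := by lia
  constructor
  · intro d hd
    have hweight := mem_weightGE.1 (hθ.1 i trivial) d hd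
    have hsum : Finsupp.weight ![singWeight m n 2, singWeight m n 0] d = d 0 + (m + n) * d 1 := by
      simp [Finsupp.weight_eq_sum, singWeight, mul_comm]
    rw [hsum] at hweight
    refine le_trans ?_ hweight
    fin_cases i
    exacts [le_rfl, Nat.add_le_add_right hk 1]
  · intro d hd
    have hweight := mem_weightGE.1 (hθ.2 i trivial) d hd
    have hsum : Finsupp.weight ![singWeight m n 0, singWeight m n 1] d = (m + n) * d 0 + d 1 := by
      simp [Finsupp.weight_eq_sum, singWeight, mul_comm]
    rw [hsum] at hweight
    refine le_trans ?_ hweight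
    fin_cases i
    exacts [Nat.add_le_add_right hk 1, le_rfl]

theorem mem_weightGE_singWeight {p : MvPolynomial (Fin 3) R} {r : ℕ} :
    p ∈ weightGE R (singWeight m n) r ↔
      ∀ d ∈ p.support, r ≤ (m + n) * d 0 + d 1 + d 2 := by
  simp [mem_weightGE, Finsupp.weight_eq_sum, Fin.sum_univ_three, singWeight, mul_comm]

theorem modelJet_mem_weightGE : modelJet R m n ∈ weightGE R (biWeight m n) (biWeight m n 0) := by
  refine add_mem (X_mem_weightGE 0) ?_
  rw [biWeight_zero_eq]
  exact mul_mem_weightGE (pow_mem_weightGE (X_mem_weightGE 1) m)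
    (pow_mem_weightGE (X_mem_weightGE 2) n)

theorem aeval_singularJet {S : Type*} [CommRing S] [Algebra R S] (u : Fin 3 → S) :
    aeval u (singularJet m n γ) = u 0 + u 1 ^ m * u 2 ^ n +
      ∑ j ∈ Finset.Icc (m + 1) (m + n - 1), algebraMap R S (γ j) * u 1 ^ j * u 2 ^ (m + n - j) := by
  simp [singularJet]

theorem singularJet_sub_modelJet_mem_weightGE : singularJet m n γ - modelJet R m n ∈
    weightGE R (biWeight m n) (biWeight m n 0 + (0, 1)) := by
  rw [singularJet, ← modelJet, add_sub_cancel_left]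
  refine Submodule.sum_mem _ fun j hj => ?_
  obtain ⟨hmj, hjn⟩ := Finset.mem_Icc.1 hj
  obtain ⟨i, rfl⟩ := Nat.exists_eq_add_of_le hmj
  obtain ⟨l, hl⟩ := Nat.exists_eq_add_of_le (show m + 1 + i ≤ m + n by lia)
  rw [mul_assoc, ← smul_eq_C_mul, hl, Nat.add_sub_cancel_left]
  have hn : (n : ℤ) = 1 + i + l := by lia
  have hsnd : (l * m + 1 : ℤ) ≤ (m + 1 + i) * n := by
    rw [hn]
    nlinarith
  have hweight : biWeight m n 0 + (0, 1) ≤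
      0 • biWeight m n 0 + (m + 1 + i) • biWeight m n 1 + l • biWeight m n 2 := by
    refine Prod.le_def.2 ⟨?_, ?_⟩
    · simpa [biWeight] using hl.le
    · simpa [biWeight, add_comm] using hsnd
  simpa using Submodule.smul_mem _ (γ (m + 1 + i))
    (X_pow_mul_X_pow_mul_X_pow_mem_weightGE (R := R) hweight)

theorem singularJet_mem_weightGE_biWeight :
    singularJet m n γ ∈ weightGE R (biWeight m n) (biWeight m n 0) := by
  rw [← sub_add_cancel (singularJet m n γ) (modelJet R m n)]
  exact add_mem (weightGE_antitone (le_add_of_nonneg_right (by simp [Prod.le_def]))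
    singularJet_sub_modelJet_mem_weightGE) modelJet_mem_weightGE

theorem singularJet_mem_weightGE_singWeight :
    singularJet m n γ ∈ weightGE R (singWeight m n) (singWeight m n 0) :=
  weightGE_biWeight_le _ singularJet_mem_weightGE_biWeight

theorem mem_weightGE_of_sub_singularJet_mem {F : MvPolynomial (Fin 3) R}
    (hF : F - singularJet m n γ ∈ weightGE R (singWeight m n) (singWeight m n 0 + 1)) :
    F ∈ weightGE R (singWeight m n) (singWeight m n 0) := by
  rw [← sub_add_cancel F (singularJet m n γ)]
  exact add_mem (weightGE_antitone (Nat.le_add_right _ _) hF) singularJet_mem_weightGE_singWeight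

theorem linearization_mem_jetReach {θ : PlaneFields R}
    (hθ : θ ∈ planeFieldsGE R (singWeight m n) t) :
    linearization (singularJet m n γ) θ ∈ jetReach m n γ t :=
  Submodule.mem_sup_left (Submodule.mem_sup_left (Submodule.mem_map_of_mem hθ))

theorem inf_weightGE_le_jetReach :
    normalForms R m n ⊓ weightGE R (singWeight m n) (singWeight m n 0 + t) ≤ jetReach m n γ t :=
  le_sup_right.trans le_sup_left

theorem weightGE_succ_le_jetReach :
    weightGE R (singWeight m n) (singWeight m n 0 + (t + 1)) ≤ jetReach m n γ t :=
  le_sup_right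

theorem modelReach_le (s : ℤ) : modelReach R m n (t, s) ≤
    jetReach m n γ t ⊔ weightGE R (biWeight m n) (biWeight m n 0 + (t, s + 1)) := by
  refine sup_le ?_ (le_sup_of_le_left ?_)
  · rintro _ ⟨θ, hθ, rfl⟩
    have hmem := linearization_mem_jetReach (γ := γ) (planeFieldsGE_biWeight_le _ hθ)
    have hdiff := neg_mem (linearization_sub_linearization_mem_weightGE
      singularJet_mem_weightGE_biWeight modelJet_mem_weightGE
      (singularJet_sub_modelJet_mem_weightGE (γ := γ)) hθ)
    rw [Prod.mk_add_mk t, add_zero, neg_sub] at hdiff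
    simpa using Submodule.add_mem_sup hmem hdiff
  · exact (inf_le_inf_left _ (weightGE_biWeight_le _)).trans inf_weightGE_le_jetReach

theorem monomial_mem_jetReach_of_lt {d : Fin 3 →₀ ℕ}
    (hd : singWeight m n 0 + t < Finsupp.weight (singWeight m n) d) :
    monomial d 1 ∈ jetReach m n γ t :=
  weightGE_succ_le_jetReach (monomial_mem_weightGE (Nat.succ_le_of_lt hd) 1)

end SingularJet

section NormalForm

variable {K : Type*} [Field K] [CharZero K] {m n : ℕ} {γ : ℕ → K} {t : ℕ}
  {F : MvPolynomial (Fin 3) K}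

theorem weightGE_biWeight_le_jetReach_of_succ (hm : m ≠ 0) (hn : n ≠ 0) {s : ℤ}
    (h : weightGE K (biWeight m n) (biWeight m n 0 + (t, s + 1)) ≤ jetReach m n γ t) :
    weightGE K (biWeight m n) (biWeight m n 0 + (t, s)) ≤ jetReach m n γ t := by
  refine weightGE_le fun d hd => ?_
  obtain hd | hd := hd.eq_or_lt
  · rw [Finsupp.weight_eq_sum, Fin.sum_univ_three] at hd
    rw [monomial_eq_X_pow_mul_X_pow_mul_X_pow]
    exact sup_le le_rfl h (modelReach_le s (monomial_mem_modelReach hm hn hd))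
  obtain ⟨hfst, -⟩ | ⟨hfst, hsnd⟩ := Prod.lt_iff.1 hd
  · exact monomial_mem_jetReach_of_lt (by rwa [← fst_weight_biWeight])
  · have hsucc : biWeight m n 0 + (t, s + 1) ≤ Finsupp.weight (biWeight m n) d := by
      refine ⟨hfst, ?_⟩
      rw [Prod.snd_add, ← add_assoc]
      exact Int.add_one_le_of_lt hsnd
    exact h (monomial_mem_weightGE hsucc 1)

theorem weightGE_le_jetReach (hm : m ≠ 0) (hn : n ≠ 0) :
    weightGE K (singWeight m n) (singWeight m n 0 + t) ≤ jetReach m n γ t := by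
  let bound : ℤ := n * (m + n + t)
  have hbi (r : ℕ) : weightGE K (biWeight m n) (biWeight m n 0 + (t, bound + 1 - r)) ≤
      jetReach m n γ t := by
    induction r with
    | zero =>
      refine weightGE_le fun d hd => monomial_mem_jetReach_of_lt (lt_of_not_ge fun hle => ?_)
      have hsnd : bound + 1 ≤ (Finsupp.weight (biWeight m n) d).2 := by
        simpa [biWeight] using hd.2
      have hle' : (n * Finsupp.weight (singWeight m n) d : ℤ) ≤ bound := by
        refine mul_le_mul_of_nonneg_left ?_ n.cast_nonneg
        exact_mod_cast hle
      exact (Int.lt_of_add_one_le hsnd).not_ge ((snd_weight_biWeight_le d).trans hle')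
    | succ r ih =>
      refine weightGE_biWeight_le_jetReach_of_succ hm hn ?_
      rwa [Nat.cast_succ, sub_add_eq_sub_sub, sub_add_cancel]
  refine weightGE_le fun d hd => ?_
  refine hbi (bound + 1 - (Finsupp.weight (biWeight m n) d).2).toNat
    (monomial_mem_weightGE (Prod.le_def.2 ⟨?_, ?_⟩) 1)
  · rwa [fst_weight_biWeight]
  · have htop := Int.self_le_toNat (bound + 1 - (Finsupp.weight (biWeight m n) d).2)
    change (0 : ℤ) + (bound + 1 - _) ≤ _
    lia

theorem exists_defect_mem_weightGE (hm : m ≠ 0) (hn : n ≠ 0)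
    (hF : F - singularJet m n γ ∈ weightGE K (singWeight m n) (singWeight m n 0 + 1)) (t : ℕ) :
    ∃ θ ∈ planeFieldsGE K (singWeight m n) 1,
      ∃ N ∈ normalForms K m n ⊓ weightGE K (singWeight m n) (singWeight m n 0 + 1),
        defect F θ (singularJet m n γ + N) ∈
          weightGE K (singWeight m n) (singWeight m n 0 + (t + 1)) := by
  have hF₀ := mem_weightGE_of_sub_singularJet_mem hF
  induction t with
  | zero => exact ⟨0, zero_mem _, 0, zero_mem _, by simpa [defect] using hF⟩
  | succ t ih =>
    obtain ⟨θ, hθ, N, hN, hdefect⟩ := ih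
    obtain ⟨_, hsum, ρ, hρ, hdecomp⟩ :=
      Submodule.mem_sup.1 (weightGE_le_jetReach (γ := γ) hm hn hdefect)
    obtain ⟨_, ⟨θ', hθ', rfl⟩, N', hN', rfl⟩ := Submodule.mem_sup.1 hsum
    refine ⟨θ - θ', sub_mem hθ (planeFieldsGE_antitone (Nat.le_add_left 1 t) hθ'), N + N',
      add_mem hN ⟨hN'.1, weightGE_antitone (by lia) hN'.2⟩, ?_⟩
    have hFG : F - (singularJet m n γ + N) ∈
        weightGE K (singWeight m n) (singWeight m n 0 + 1) := by
      rw [← sub_sub]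
      exact sub_mem hF hN.2
    have hstep := defect_sub_mem_weightGE zero_le (Nat.le_add_left 1 t) hF₀ hFG hθ hθ' hN'.2
    have hlin := linearization_sub_linearization_mem_weightGE hF₀
      singularJet_mem_weightGE_singWeight hF hθ'
    rw [← add_assoc (singularJet m n γ)]
    convert add_mem hstep (sub_mem hρ hlin) using 1
    rw [← hdecomp]
    ring

theorem exists_normalForm (hm : m ≠ 0) (hn : n ≠ 0)
    (hF : F - singularJet m n γ ∈ weightGE K (singWeight m n) (singWeight m n 0 + 1)) (ℓ : ℕ) :
    ∃ θ ∈ planeFieldsGE K (singWeight m n) 1, ∃ N : ℕ → MvPolynomial (Fin 3) K,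
      (∀ ν, (N ν).IsWeightedHomogeneous (singWeight m n) ν ∧ N ν ∈ normalForms K m n) ∧
        defect F θ (singularJet m n γ + ∑ ν ∈ Finset.Icc (singWeight m n 0 + 1) ℓ, N ν) ∈
          weightGE K (singWeight m n) (ℓ + 1) := by
  obtain ⟨θ, hθ, N, ⟨hN, hN'⟩, hdefect⟩ := exists_defect_mem_weightGE hm hn hF ℓ
  refine ⟨θ, hθ, fun ν => weightedHomogeneousComponent (singWeight m n) ν N,
    fun ν => ⟨weightedHomogeneousComponent_isWeightedHomogeneous _ _,
      weightedHomogeneousComponent_mem_restrictSupport hN⟩, ?_⟩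
  have htail := aeval_mem_weightGE
    (X_add_displacement_mem_weightGE zero_le (mem_weightGE_of_sub_singularJet_mem hF) hθ)
    (sub_sum_weightedHomogeneousComponent_mem_weightGE hN' ℓ)
  convert add_mem (weightGE_antitone (Nat.le_add_left _ _) hdefect) htail using 1
  have hcoord : (fun i => X i + displacement F θ i) = X + displacement F θ := rfl
  simp only [defect, hcoord, map_add, map_sub]
  ring

end NormalForm

theorem stmt8_general {K : Type*} [Field K] [CharZero K] (k m n ℓ : ℕ) (hm : 1 ≤ m) (hn : 1 ≤ n)
    (hmn : m + n = k) (γ : ℕ → K) (P : ℕ → MvPolynomial (Fin 3) K)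
    (hP : ∀ ν ∈ Finset.Icc (k + 1) ℓ,
      (P ν).IsWeightedHomogeneous (![k, 1, 1] : Fin 3 → ℕ) ν) :
    ∃ ξ η α β : MvPolynomial (Fin 2) K,
      (∀ d ∈ ξ.support, 2 ≤ d 0 + k * d 1) ∧
      (∀ d ∈ η.support, 2 ≤ d 0 + k * d 1) ∧
      (∀ d ∈ α.support, 2 ≤ k * d 0 + d 1) ∧
      (∀ d ∈ β.support, 2 ≤ k * d 0 + d 1) ∧
      ∃ Ps : ℕ → MvPolynomial (Fin 3) K,
        (∀ ν ∈ Finset.Icc (k + 1) ℓ,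
          (Ps ν).IsWeightedHomogeneous (![k, 1, 1] : Fin 3 → ℕ) ν ∧
          ∀ d ∈ (Ps ν).support, ¬ SingNonNormal m n d) ∧
        (let Fl : MvPolynomial (Fin 3) K :=
          X 0 + X 1 ^ m * X 2 ^ n +
            (∑ j ∈ Finset.Icc (m + 1) (k - 1), C (γ j) * X 1 ^ j * X 2 ^ (k - j)) +
            ∑ ν ∈ Finset.Icc (k + 1) ℓ, P ν
        let A : MvPolynomial (Fin 3) K := X 0 + aeval ![(X 0 : MvPolynomial (Fin 3) K), X 1] α
        let B : MvPolynomial (Fin 3) K := X 1 + aeval ![(X 0 : MvPolynomial (Fin 3) K), X 1] β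
        let Xc : MvPolynomial (Fin 3) K := X 2 + aeval ![(X 2 : MvPolynomial (Fin 3) K), Fl] ξ
        let Yc : MvPolynomial (Fin 3) K := Fl + aeval ![(X 2 : MvPolynomial (Fin 3) K), Fl] η
        ∀ d ∈ (Yc - (A + B ^ m * Xc ^ n +
            (∑ j ∈ Finset.Icc (m + 1) (k - 1), C (γ j) * B ^ j * Xc ^ (k - j)) +
            ∑ ν ∈ Finset.Icc (k + 1) ℓ, aeval ![A, B, Xc] (Ps ν))).support,
          ℓ < k * d 0 + d 1 + d 2) := by
  subst hmn
  have hF : singularJet m n γ + ∑ ν ∈ Finset.Icc (m + n + 1) ℓ, P ν - singularJet m n γ ∈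
      weightGE K (singWeight m n) (m + n + 1) := by
    rw [add_sub_cancel_left]
    exact Submodule.sum_mem _ fun ν hν => weightGE_antitone (Finset.mem_Icc.1 hν).1
      (mem_weightGE_of_isWeightedHomogeneous (hP ν hν))
  obtain ⟨θ, hθ, N, hN, hdefect⟩ := exists_normalForm (by lia) (by lia) hF ℓ
  have hdeg := two_le_of_mem_planeFieldsGE (by lia) hθ
  refine ⟨θ.1 0, θ.1 1, θ.2 0, θ.2 1, (hdeg 0).1, (hdeg 1).1, (hdeg 0).2, (hdeg 1).2, N,
    fun ν _ => ⟨(hN ν).1, (mem_restrictSupport_iff K).1 (hN ν).2⟩, ?_⟩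
  intro Fl A B Xc Yc d hd
  have hcoord : X + displacement Fl θ = ![A, B, Xc] := funext fun i => by fin_cases i <;> rfl
  refine mem_weightGE_singWeight.1 hdefect d ?_
  change d ∈ (Yc - aeval (X + displacement Fl θ) _).support
  rwa [hcoord, map_add, map_sum, aeval_singularJet]

/-- Every weighted `ℓ`-jet
`F_ℓ = a + b^m x^n + Σ_{j=m+1}^{k−1} γ_j b^j x^{k−j} + Σ_{ν=k+1}^{ℓ} P_ν`
of a finite type hypersurface can be taken into normal form of order `ℓ` with
respect to `b^m x^n` by a triangular polynomial change of coordinates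
`X = x + ξ(x,y)`, `Y = y + η(x,y)`, `A = a + α(a,b)`, `B = b + β(a,b)`:
after substituting `y = F_ℓ`, the defining equation of the transformed
hypersurface agrees with
`A + B^m X^n + Σ_j γ_j B^j X^{k−j} + Σ_ν P*_ν(A,B,X)` up to terms of weighted
degree `> ℓ`, where each `P*_ν` is weighted homogeneous of weight `ν` and
contains no monomial of the excluded types. -/
theorem stmt8 (k m n ℓ : ℕ) (hk : 2 < k) (hm : 1 ≤ m) (hn : 1 ≤ n)
    (hmn : m + n = k) (hℓ : k < ℓ) (γ : ℕ → ℝ) (P : ℕ → MvPolynomial (Fin 3) ℝ)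
    (hP : ∀ ν ∈ Finset.Icc (k + 1) ℓ,
      (P ν).IsWeightedHomogeneous (![k, 1, 1] : Fin 3 → ℕ) ν) :
    ∃ ξ η α β : MvPolynomial (Fin 2) ℝ,
      (∀ d ∈ ξ.support, 2 ≤ d 0 + k * d 1) ∧
      (∀ d ∈ η.support, 2 ≤ d 0 + k * d 1) ∧
      (∀ d ∈ α.support, 2 ≤ k * d 0 + d 1) ∧
      (∀ d ∈ β.support, 2 ≤ k * d 0 + d 1) ∧
      ∃ Ps : ℕ → MvPolynomial (Fin 3) ℝ,
        (∀ ν ∈ Finset.Icc (k + 1) ℓ,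
          (Ps ν).IsWeightedHomogeneous (![k, 1, 1] : Fin 3 → ℕ) ν ∧
          ∀ d ∈ (Ps ν).support, ¬ SingNonNormal m n d) ∧
        (let Fl : MvPolynomial (Fin 3) ℝ :=
          X 0 + X 1 ^ m * X 2 ^ n +
            (∑ j ∈ Finset.Icc (m + 1) (k - 1), C (γ j) * X 1 ^ j * X 2 ^ (k - j)) +
            ∑ ν ∈ Finset.Icc (k + 1) ℓ, P ν
        let A : MvPolynomial (Fin 3) ℝ := X 0 + aeval ![(X 0 : MvPolynomial (Fin 3) ℝ), X 1] α
        let B : MvPolynomial (Fin 3) ℝ := X 1 + aeval ![(X 0 : MvPolynomial (Fin 3) ℝ), X 1] β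
        let Xc : MvPolynomial (Fin 3) ℝ := X 2 + aeval ![(X 2 : MvPolynomial (Fin 3) ℝ), Fl] ξ
        let Yc : MvPolynomial (Fin 3) ℝ := Fl + aeval ![(X 2 : MvPolynomial (Fin 3) ℝ), Fl] η
        ∀ d ∈ (Yc - (A + B ^ m * Xc ^ n +
            (∑ j ∈ Finset.Icc (m + 1) (k - 1), C (γ j) * B ^ j * Xc ^ (k - j)) +
            ∑ ν ∈ Finset.Icc (k + 1) ℓ, aeval ![A, B, Xc] (Ps ν))).support,
          ℓ < k * d 0 + d 1 + d 2) :=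
  stmt8_general k m n ℓ hm hn hmn γ P hP
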